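/- Let Ω, Ω' ⊂ ℝ^n be open, n ≥ 2, and let f ∈ W^{1,1}_{loc}(Ω; Ω') be a homeomorphism. Then for a.e. x ∈ Ω at which f is differentiable and 0 < J_f(x) < ∞, one has K_f(x) = K^{fine}_f(x). -/

import Mathlib

open MeasureTheory Metric Set Filter ENNReal NNReal Topology

noncomputable section

/-- Euclidean space `ℝⁿ`. -/
abbrev En (n : ℕ) : Type := EuclideanSpace ℝ (Fin n)

variable {n : ℕ}

/-- `g` is the weak (distributional) gradient of `u : ℝⁿ → ℝ` on all of `ℝⁿ`. -/
def IsWeakGrad (u : En n → ℝ) (g : En n → (En n →L[ℝ] ℝ)) : Prop :=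
  ∀ φ : En n → ℝ, ContDiff ℝ 1 φ → HasCompactSupport φ →
    ∀ v : En n, ∫ x, u x * fderiv ℝ φ x v = - ∫ x, φ x * g x v

/-- The Sobolev 1-capacity: infimum of `W^{1,1}` norms of functions `u ≥ 1` on a
neighborhood of `A`. -/
def cap1 (A : Set (En n)) : ℝ≥0∞ :=
  sInf { c : ℝ≥0∞ | ∃ u : En n → ℝ, ∃ g : En n → (En n →L[ℝ] ℝ),
    Integrable u ∧ Integrable (fun x => ‖g x‖) ∧ IsWeakGrad u g ∧
    (∃ V : Set (En n), IsOpen V ∧ A ⊆ V ∧ ∀ x ∈ V, 1 ≤ u x) ∧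
    c = ENNReal.ofReal ((∫ x, |u x|) + ∫ x, ‖g x‖) }

/-- A set `U ⊆ ℝⁿ` is 1-finely open. -/
def FinelyOpen1 (U : Set (En n)) : Prop :=
  ∀ x ∈ U, Tendsto (fun r : ℝ => cap1 (Uᶜ ∩ ball x r) / ENNReal.ofReal (r ^ (n - 1)))
    (𝓝[>] 0) (𝓝 0)

/-- The relaxed quasiconformality quotient `K_{f,U}(x,r)`. -/
def KfU (f : En n → En n) (U : Set (En n)) (x : En n) (r : ℝ) : ℝ≥0∞ :=
  if volume (f '' ball x r) = 0 then ∞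
  else (EMetric.diam (f '' (ball x r ∩ U)) ^ n / volume (f '' ball x r)) ^ (((n : ℝ) - 1)⁻¹)

/-- Fine quasiconformal dilatation `K_f^fine(x)`. -/
def Kfine (f : En n → En n) (x : En n) : ℝ≥0∞ :=
  ⨅ (U : Set (En n)) (_ : FinelyOpen1 U) (_ : x ∈ U),
    Filter.limsup (fun r => KfU f U x r) (𝓝[>] 0)

/-- Metric quasiconformal dilatation `K_f(x)`. -/
def Kmetric (f : En n → En n) (x : En n) : ℝ≥0∞ :=
  Filter.limsup (fun r => KfU f univ x r) (𝓝[>] 0)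

/-- Volume derivative (Jacobian) `J_f(x)`. -/
def Jvol (f : En n → En n) (x : En n) : ℝ≥0∞ :=
  Filter.limsup (fun r => volume (f '' ball x r) / volume (ball x r)) (𝓝[>] 0)

/-- `g` is the weak gradient of the mapping `f : ℝⁿ → ℝⁿ` on the open set `Ω`. -/
def HasWeakGradOn (f : En n → En n) (g : En n → (En n →L[ℝ] En n)) (Ω : Set (En n)) : Prop :=
  ∀ φ : En n → ℝ, ContDiff ℝ 1 φ → HasCompactSupport φ → tsupport φ ⊆ Ω →
    ∀ v : En n, ∫ x in Ω, (fderiv ℝ φ x v) • f x = - ∫ x in Ω, φ x • g x v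

/-- The precise representative `f*` (componentwise limsup of ball averages). -/
def precise (f : En n → En n) (x : En n) : En n :=
  (EuclideanSpace.equiv (Fin n) ℝ).symm
    (fun i => Filter.limsup (fun r => ⨍ y in ball x r, f y i) (𝓝[>] 0))

/-- Centered Hardy–Littlewood maximal function of `u : ℝⁿ → ℝ`. -/
def maxFn (u : En n → ℝ) (x : En n) : ℝ≥0∞ :=
  ⨆ (r : ℝ) (_ : 0 < r), (volume (ball x r))⁻¹ * ∫⁻ y in ball x r, ‖u y‖₊

/-- Centered Hardy–Littlewood maximal function of `ρ : ℝⁿ → ℝ≥0∞`. -/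
def maxFn' (ρ : En n → ℝ≥0∞) (x : En n) : ℝ≥0∞ :=
  ⨆ (r : ℝ) (_ : 0 < r), (volume (ball x r))⁻¹ * ∫⁻ y in ball x r, ρ y

section Translates

variable {E : Type*} [NormedAddCommGroup E] [NormedSpace ℝ E]

lemma tendsto_integral_mul_translate_atTop [MeasurableSpace E] [BorelSpace E] {μ : Measure E}
    {u ψ : E → ℝ} (hu : Integrable u μ) (hψ : Continuous ψ) {p : E} {ρ : ℝ}
    (hsupp : ∀ z, z ∉ ball p ρ → ψ z = 0) (h1 : ∀ z, |ψ z| ≤ 1) {e : E} (he : ‖e‖ = 1) :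
    Tendsto (fun t : ℝ => ∫ z, u z * ψ (z - t • e) ∂μ) atTop (𝓝 0) := by
  rw [← integral_zero E ℝ (μ := μ)]
  refine tendsto_integral_filter_of_dominated_convergence (fun z => |u z|)
    (.of_forall fun t => ?_) (.of_forall fun t => .of_forall fun z => ?_) hu.abs
    (.of_forall fun z => ?_)
  · exact hu.aestronglyMeasurable.mul
      (by fun_prop : Continuous fun z => ψ (z - t • e)).aestronglyMeasurable
  · rw [Real.norm_eq_abs, abs_mul]
    exact mul_le_of_le_one_right (abs_nonneg _) (h1 _)
  · refine tendsto_const_nhds.congr' ?_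
    filter_upwards [eventually_gt_atTop (ρ + ‖z - p‖), eventually_ge_atTop 0] with t ht ht0
    rw [hsupp _ fun hb => ?_, mul_zero]
    rw [mem_ball, dist_eq_norm] at hb
    have : ‖t • e‖ ≤ ‖z - p‖ + ‖z - t • e - p‖ := by
      calc ‖t • e‖ = ‖(z - p) - (z - t • e - p)‖ := by congr 1; abel
        _ ≤ _ := norm_sub_le _ _
    rw [norm_smul, he, mul_one, Real.norm_of_nonneg ht0] at this
    linarith

variable [FiniteDimensional ℝ E]

lemma hasFDerivAt_intervalIntegral_translate {ψ : E → ℝ} (hψ : ContDiff ℝ 1 ψ)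
    (hc : HasCompactSupport ψ) (e : E) (t : ℝ) (z : E) :
    HasFDerivAt (fun z => ∫ s in (0 : ℝ)..t, ψ (z - s • e))
      (∫ s in (0 : ℝ)..t, fderiv ℝ ψ (z - s • e)) z := by
  have hd : Continuous (fderiv ℝ ψ) := hψ.continuous_fderiv one_ne_zero
  obtain ⟨C, hC⟩ := (hc.fderiv (𝕜 := ℝ)).exists_bound_of_continuous hd
  have hψc := hψ.continuous
  refine intervalIntegral.hasFDerivAt_integral_of_dominated_of_fderiv_le
    (F' := fun z s => fderiv ℝ ψ (z - s • e)) (bound := fun _ => C) univ_mem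
    (.of_forall fun x => ?_) ?_ ?_ (.of_forall fun s _ x _ => hC _) ?_
    (.of_forall fun s _ x _ => ?_)
  · exact (by fun_prop : Continuous fun s : ℝ => ψ (x - s • e)).aestronglyMeasurable
  · exact (by fun_prop : Continuous fun s : ℝ => ψ (z - s • e)).intervalIntegrable _ _
  · exact (by fun_prop : Continuous fun s : ℝ => fderiv ℝ ψ (z - s • e)).aestronglyMeasurable
  · exact intervalIntegrable_const
  · have h := (hψ.differentiable one_ne_zero (x - s • e)).hasFDerivAt
    exact h.comp x ((hasFDerivAt_id x).sub_const (s • e))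

lemma contDiff_intervalIntegral_translate {ψ : E → ℝ} (hψ : ContDiff ℝ 1 ψ)
    (hc : HasCompactSupport ψ) (e : E) (t : ℝ) :
    ContDiff ℝ 1 (fun z => ∫ s in (0 : ℝ)..t, ψ (z - s • e)) := by
  have hd : Continuous (fderiv ℝ ψ) := hψ.continuous_fderiv one_ne_zero
  refine contDiff_one_iff_hasFDerivAt.2 ⟨_, ?_, hasFDerivAt_intervalIntegral_translate hψ hc e t⟩
  refine intervalIntegral.continuous_parametric_intervalIntegral_of_continuous'
    (f := fun z s => fderiv ℝ ψ (z - s • e)) ?_ 0 t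
  exact hd.comp (by fun_prop : Continuous fun q : E × ℝ => q.1 - q.2 • e)

lemma fderiv_intervalIntegral_translate_apply {ψ : E → ℝ} (hψ : ContDiff ℝ 1 ψ)
    (hc : HasCompactSupport ψ) (e : E) (t : ℝ) (z : E) :
    fderiv ℝ (fun z => ∫ s in (0 : ℝ)..t, ψ (z - s • e)) z e = ψ z - ψ (z - t • e) := by
  have hd : Continuous (fderiv ℝ ψ) := hψ.continuous_fderiv one_ne_zero
  have hcont : Continuous fun s : ℝ => fderiv ℝ ψ (z - s • e) := by fun_prop
  rw [(hasFDerivAt_intervalIntegral_translate hψ hc e t z).fderiv,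
    ContinuousLinearMap.intervalIntegral_apply (hcont.intervalIntegrable _ _)]
  have key : ∀ s ∈ uIcc 0 t, HasDerivAt (fun s : ℝ => -ψ (z - s • e))
      (fderiv ℝ ψ (z - s • e) e) s := by
    intro s _
    have h1 : HasDerivAt (fun s : ℝ => z - s • e) (-e) s := by
      simpa using ((hasDerivAt_id s).smul_const e).const_sub z
    have h2 := (hψ.differentiable one_ne_zero (z - s • e)).hasFDerivAt.comp_hasDerivAt s h1
    simpa [Function.comp_def] using h2.fun_neg
  rw [intervalIntegral.integral_eq_sub_of_hasDerivAt key
    ((by fun_prop : Continuous fun s : ℝ => fderiv ℝ ψ (z - s • e) e).intervalIntegrable _ _)]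
  simp only [zero_smul, sub_zero]
  ring

lemma hasCompactSupport_intervalIntegral_translate {ψ : E → ℝ} {p : E} {ρ : ℝ}
    (hsupp : ∀ z, z ∉ ball p ρ → ψ z = 0) (e : E) {t : ℝ} (ht : 0 ≤ t) :
    HasCompactSupport (fun z => ∫ s in (0 : ℝ)..t, ψ (z - s • e)) := by
  refine HasCompactSupport.intro (isCompact_closedBall p (ρ + t * ‖e‖)) fun z hz => ?_
  rw [intervalIntegral.integral_congr (g := fun _ => (0 : ℝ))]
  · simp
  intro s hs
  rw [uIcc_of_le ht] at hs
  refine hsupp _ fun hb => hz ?_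
  rw [mem_ball, dist_eq_norm] at hb
  rw [mem_closedBall, dist_eq_norm]
  calc ‖z - p‖ = ‖(z - s • e - p) + s • e‖ := by congr 1; abel
    _ ≤ ‖z - s • e - p‖ + ‖s • e‖ := norm_add_le _ _
    _ ≤ ρ + t * ‖e‖ := by
      rw [norm_smul, Real.norm_of_nonneg hs.1]
      gcongr
      exact hs.2

end Translates

lemma abs_intervalIntegral_translate_le {ψ : En n → ℝ} (hψ : Continuous ψ) {p : En n} {ρ : ℝ}
    (hsupp : ∀ z, z ∉ ball p ρ → ψ z = 0) (h0 : ∀ z, 0 ≤ ψ z) (h1 : ∀ z, ψ z ≤ 1) {e : En n}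
    (he : ‖e‖ = 1) (hρ : 0 ≤ ρ) {t : ℝ} (ht : 0 ≤ t) (z : En n) :
    |∫ s in (0 : ℝ)..t, ψ (z - s • e)| ≤ 2 * ρ := by
  have hcont : Continuous fun s : ℝ => ψ (z - s • e) := by fun_prop
  rw [abs_of_nonneg (intervalIntegral.integral_nonneg ht fun s _ => h0 _),
    intervalIntegral.integral_of_le ht]
  set a : ℝ := inner ℝ (z - p) e
  have hle : ∀ s, ψ (z - s • e) ≤ (ball a ρ).indicator (fun _ => (1 : ℝ)) s := by
    intro s
    by_cases hs : s ∈ ball a ρ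
    · simpa [hs] using h1 _
    · rw [indicator_of_notMem hs, hsupp]
      contrapose! hs
      rw [mem_ball, dist_eq_norm] at hs ⊢
      have : a - s = inner ℝ (z - s • e - p) e := by
        rw [show z - s • e - p = (z - p) - s • e by abel, inner_sub_left, real_inner_smul_left,
          real_inner_self_eq_norm_sq, he]
        simp [a]
      rw [← norm_neg, neg_sub, this]
      calc _ ≤ ‖z - s • e - p‖ * ‖e‖ := norm_inner_le_norm _ _
        _ < ρ := by rwa [he, mul_one]
  have hint : Integrable ((ball a ρ).indicator (fun _ => (1 : ℝ))) :=
    (integrable_indicator_iff measurableSet_ball).2 (integrableOn_const measure_ball_lt_top.ne)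
  calc ∫ s in Ioc 0 t, ψ (z - s • e)
      ≤ ∫ s in Ioc 0 t, (ball a ρ).indicator (fun _ => (1 : ℝ)) s :=
        integral_mono (hcont.integrableOn_Ioc) hint.integrableOn hle
    _ ≤ ∫ s, (ball a ρ).indicator (fun _ => (1 : ℝ)) s :=
        setIntegral_le_integral hint (.of_forall fun s => indicator_nonneg (by simp) s)
    _ = 2 * ρ := by
        rw [integral_indicator measurableSet_ball]
        simp [measureReal_def, Real.volume_ball, hρ]

/-- A Sobolev-type inequality for functions that are at least one on a ball. -/
lemma IsWeakGrad.volume_ball_le (hn : 1 ≤ n) {u : En n → ℝ} {g : En n → (En n →L[ℝ] ℝ)}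
    (hw : IsWeakGrad u g) (hu : Integrable u) (hg : Integrable fun x => ‖g x‖) {p : En n} {ρ : ℝ}
    (hρ : 0 < ρ) (h1 : ∀ x ∈ ball p ρ, 1 ≤ u x) :
    volume.real (ball p (ρ / 2)) ≤ 2 * ρ * ∫ x, ‖g x‖ := by
  let ψ : ContDiffBump p := ⟨ρ / 2, ρ, by positivity, by linarith⟩
  have hψ : ContDiff ℝ 1 ψ := ψ.contDiff
  have hsupp : ∀ z, z ∉ ball p ρ → ψ z = 0 := fun z hz =>
    ψ.zero_of_le_dist (by simpa using hz)
  let e : En n := EuclideanSpace.single ⟨0, hn⟩ (1 : ℝ)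
  have he : ‖e‖ = 1 := by simp [e]
  have hint : ∀ t : ℝ, Integrable fun z => u z * ψ (z - t • e) := fun t =>
    hu.mul_bdd (c := 1)
      (by have := ψ.continuous; fun_prop : Continuous fun z => ψ (z - t • e)).aestronglyMeasurable
      (.of_forall fun z => by rw [Real.norm_of_nonneg ψ.nonneg]; exact ψ.le_one)
  have hint0 : Integrable fun z => u z * ψ z := by simpa using hint 0
  have hψint : Integrable ψ := ψ.continuous.integrable_of_hasCompactSupport ψ.hasCompactSupport
  have hlow : volume.real (ball p (ρ / 2)) ≤ ∫ z, u z * ψ z := by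
    calc volume.real (ball p (ρ / 2)) = ∫ z, (ball p (ρ / 2)).indicator (fun _ => (1 : ℝ)) z := by
          rw [integral_indicator measurableSet_ball]; simp
      _ ≤ ∫ z, ψ z := by
          refine integral_mono ((integrable_indicator_iff measurableSet_ball).2
            (integrableOn_const measure_ball_lt_top.ne)) hψint fun z => ?_
          by_cases hz : z ∈ ball p (ρ / 2)
          · rw [indicator_of_mem hz, ψ.one_of_mem_closedBall (ball_subset_closedBall hz)]
          · rw [indicator_of_notMem hz]
            exact ψ.nonneg
      _ ≤ ∫ z, u z * ψ z := by
          refine integral_mono hψint hint0 fun z => ?_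
          by_cases hz : z ∈ ball p ρ
          · exact le_mul_of_one_le_left ψ.nonneg (h1 z hz)
          · simp [hsupp z hz]
  have hbound : ∀ t : ℝ, 0 ≤ t →
      ∫ z, u z * ψ z ≤ 2 * ρ * (∫ x, ‖g x‖) + ∫ z, u z * ψ (z - t • e) := by
    intro t ht
    set φ : En n → ℝ := fun z => ∫ s in (0 : ℝ)..t, ψ (z - s • e)
    have hweak := hw φ (contDiff_intervalIntegral_translate hψ ψ.hasCompactSupport e t)
      (hasCompactSupport_intervalIntegral_translate hsupp e ht) e
    simp_rw [φ, fderiv_intervalIntegral_translate_apply hψ ψ.hasCompactSupport e t, mul_sub]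
      at hweak
    rw [integral_sub hint0 (hint t)] at hweak
    have hnorm : ‖∫ x, φ x * g x e‖ ≤ ∫ x, 2 * ρ * ‖g x‖ := by
      refine norm_integral_le_of_norm_le (hg.const_mul _) (.of_forall fun x => ?_)
      rw [norm_mul]
      refine mul_le_mul (abs_intervalIntegral_translate_le ψ.continuous hsupp
        (fun _ => ψ.nonneg) (fun _ => ψ.le_one) he hρ.le ht x) ?_ (norm_nonneg _) (by positivity)
      simpa [he] using (g x).le_opNorm e
    rw [integral_const_mul] at hnorm
    have := (neg_le_abs _).trans hnorm
    linarith
  have hlim : Tendsto (fun t : ℝ => 2 * ρ * (∫ x, ‖g x‖) + ∫ z, u z * ψ (z - t • e)) atTop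
      (𝓝 (2 * ρ * (∫ x, ‖g x‖) + 0)) :=
    (tendsto_integral_mul_translate_atTop hu ψ.continuous hsupp
      (fun z => by rw [abs_of_nonneg ψ.nonneg]; exact ψ.le_one) he).const_add _
  rw [add_zero] at hlim
  exact hlow.trans (ge_of_tendsto hlim ((eventually_ge_atTop 0).mono hbound))

lemma exists_le_cap1 (hn : 1 ≤ n) : ∃ c : ℝ, 0 < c ∧ ∀ (A : Set (En n)) (p : En n) (ρ : ℝ),
    0 < ρ → ball p ρ ⊆ A → ENNReal.ofReal (c * ρ ^ (n - 1)) ≤ cap1 A := by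
  have hκ : 0 < volume.real (ball (0 : En n) 1) :=
    ENNReal.toReal_pos (measure_ball_pos _ _ one_pos).ne' measure_ball_lt_top.ne
  refine ⟨volume.real (ball (0 : En n) 1) / 2 ^ (n + 1), by positivity, fun A p ρ hρ hA => ?_⟩
  refine le_sInf ?_
  rintro _ ⟨u, g, hu, hg, hw, ⟨V, -, hAV, hV⟩, rfl⟩
  refine ENNReal.ofReal_le_ofReal ?_
  have h := hw.volume_ball_le hn hu hg hρ fun x hx => hV x (hAV (hA hx))
  have hball : volume.real (ball p (ρ / 2)) = (ρ / 2) ^ n * volume.real (ball (0 : En n) 1) := by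
    rw [measureReal_def, Measure.addHaar_ball_of_pos _ _ (by positivity : 0 < ρ / 2),
      ENNReal.toReal_mul, ENNReal.toReal_ofReal (by positivity), finrank_euclideanSpace_fin,
      measureReal_def]
  have hρn : ρ ^ n = ρ ^ (n - 1) * ρ := by rw [← pow_succ, Nat.sub_add_cancel hn]
  have hI : 0 ≤ ∫ x, |u x| := integral_nonneg fun _ => abs_nonneg _
  refine le_trans ?_ (le_add_of_nonneg_left hI)
  rw [hball, div_pow, hρn] at h
  rw [div_mul_eq_mul_div, div_le_iff₀ (by positivity), pow_succ]
  rw [div_mul_eq_mul_div, div_le_iff₀ (by positivity)] at h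
  nlinarith

lemma cap1_empty : cap1 (∅ : Set (En n)) = 0 := by
  refine le_antisymm (sInf_le ⟨0, 0, integrable_zero _ _ _, by simp, ?_,
    ⟨∅, isOpen_empty, subset_rfl, by simp⟩, by simp⟩) zero_le
  intro φ _ _ v
  simp

lemma finelyOpen1_univ : FinelyOpen1 (univ : Set (En n)) := by
  intro x _
  simp [cap1_empty]

lemma FinelyOpen1.eventually_inter_ball_nonempty (hn : 1 ≤ n) {U : Set (En n)}
    (hU : FinelyOpen1 U) {x : En n} (hx : x ∈ U) {ε : ℝ} (hε : 0 < ε) :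
    ∀ᶠ r in 𝓝[>] (0 : ℝ), ∀ p, ball p (ε * r) ⊆ ball x r → (U ∩ ball p (ε * r)).Nonempty := by
  obtain ⟨c, hc, hcap⟩ := exists_le_cap1 hn
  have hpos : 0 < ENNReal.ofReal (c * ε ^ (n - 1)) := ENNReal.ofReal_pos.2 (by positivity)
  filter_upwards [(hU x hx).eventually_lt_const hpos, self_mem_nhdsWithin] with r hr hr0 p hp
  rw [mem_Ioi] at hr0
  by_contra hempty
  have hsub : ball p (ε * r) ⊆ Uᶜ ∩ ball x r := fun y hy =>
    ⟨fun hyU => hempty ⟨y, hyU, hy⟩, hp hy⟩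
  have h := hcap _ p (ε * r) (by positivity) hsub
  have hrn : 0 < r ^ (n - 1) := by positivity
  rw [ENNReal.div_lt_iff (.inl (ENNReal.ofReal_pos.2 hrn).ne') (.inl ofReal_ne_top),
    ← ENNReal.ofReal_mul (by positivity), mul_assoc, ← mul_pow] at hr
  exact absurd hr h.not_gt

section Differentiable

variable {f : En n → En n} {L : En n →L[ℝ] En n} {x : En n}

lemma HasFDerivAt.eventually_forall_ball_norm_le (hf : HasFDerivAt f L x) {η : ℝ} (hη : 0 < η) :
    ∀ᶠ r in 𝓝[>] (0 : ℝ), ∀ y ∈ ball x r, ‖f y - f x - L (y - x)‖ ≤ η * r := by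
  obtain ⟨δ, hδ, h⟩ := Metric.eventually_nhds_iff_ball.1
    ((hasFDerivAt_iff_isLittleO.1 hf).def hη)
  filter_upwards [Ioo_mem_nhdsGT hδ] with r hr y hy
  refine (h y (ball_subset_ball hr.2.le hy)).trans ?_
  rw [← dist_eq_norm y x]
  gcongr
  exact (mem_ball.1 hy).le

lemma HasFDerivAt.eventually_diam_image_ball_le (hf : HasFDerivAt f L x) {M : ℝ}
    (hM : 2 * ‖L‖ < M) :
    ∀ᶠ r in 𝓝[>] (0 : ℝ), Metric.ediam (f '' ball x r) ≤ ENNReal.ofReal (M * r) := by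
  filter_upwards [hf.eventually_forall_ball_norm_le (half_pos (sub_pos.2 hM))] with r hr
  refine Metric.ediam_le ?_
  rintro _ ⟨y, hy, rfl⟩ _ ⟨z, hz, rfl⟩
  rw [edist_dist, dist_eq_norm]
  refine ENNReal.ofReal_le_ofReal ?_
  have hy' := hr y hy
  have hz' := hr z hz
  rw [mem_ball, dist_eq_norm] at hy hz
  have hLyz : ‖L (y - x) - L (z - x)‖ ≤ ‖L‖ * (2 * r) := by
    rw [← map_sub]
    refine (L.le_opNorm _).trans ?_
    gcongr
    exact (norm_sub_le _ _).trans (by linarith)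
  calc ‖f y - f z‖ = ‖((f y - f x - L (y - x)) - (f z - f x - L (z - x)))
          + (L (y - x) - L (z - x))‖ := by congr 1; abel
    _ ≤ ‖f y - f x - L (y - x)‖ + ‖f z - f x - L (z - x)‖ + ‖L (y - x) - L (z - x)‖ :=
        (norm_add_le _ _).trans (by gcongr; exact norm_sub_le _ _)
    _ ≤ M * r := by linarith

lemma HasFDerivAt.eventually_le_diam_image_ball_inter (hn : 1 ≤ n) (hf : HasFDerivAt f L x)
    {U : Set (En n)} (hU : FinelyOpen1 U) (hx : x ∈ U) {m : ℝ} (hm0 : 0 ≤ m)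
    (hm : m < 2 * ‖L‖) :
    ∀ᶠ r in 𝓝[>] (0 : ℝ), ENNReal.ofReal (m * r) ≤ Metric.ediam (f '' (ball x r ∩ U)) := by
  obtain ⟨v, hv1, hv⟩ := L.exists_lt_apply_of_lt_opNorm (by linarith : m / 2 < ‖L‖)
  have hL : 0 < ‖L‖ := by linarith
  have hgap : 0 < 2 * ‖L v‖ - m := by linarith
  set ε : ℝ := min (1 - ‖v‖) ((2 * ‖L v‖ - m) / (4 * ‖L‖))
  have hε : 0 < ε := lt_min (by linarith) (by positivity)
  have hε1 : ε ≤ 1 - ‖v‖ := min_le_left _ _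
  have hε2 : 4 * ‖L‖ * ε ≤ 2 * ‖L v‖ - m := by
    rw [mul_comm, ← le_div_iff₀ (by positivity)]
    exact min_le_right _ _
  filter_upwards [hU.eventually_inter_ball_nonempty hn hx hε,
    hf.eventually_forall_ball_norm_le (by positivity : 0 < (2 * ‖L v‖ - m) / 4),
    self_mem_nhdsWithin] with r hne hr hr0
  rw [mem_Ioi] at hr0
  have hsub : ∀ w : En n, ‖w‖ = ‖v‖ → ball (x + r • w) (ε * r) ⊆ ball x r := by
    intro w hw
    refine ball_subset_ball' ?_
    rw [dist_eq_norm, add_sub_cancel_left, norm_smul, hw, Real.norm_of_nonneg hr0.le]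
    nlinarith
  obtain ⟨y, hyU, hy⟩ := hne _ (hsub v rfl)
  obtain ⟨z, hzU, hz⟩ := hne _ (hsub (-v) (norm_neg v))
  have hyx := hsub v rfl hy
  have hzx := hsub (-v) (norm_neg v) hz
  refine le_trans ?_ (Metric.edist_le_ediam_of_mem (mem_image_of_mem f ⟨hyx, hyU⟩)
    (mem_image_of_mem f ⟨hzx, hzU⟩))
  rw [edist_dist, dist_eq_norm]
  refine ENNReal.ofReal_le_ofReal ?_
  have hy' := hr y hyx
  have hz' := hr z hzx
  rw [mem_ball, dist_eq_norm] at hy hz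
  set a := y - (x + r • v)
  set b := z - (x + r • -v)
  have hab : ‖L (a - b)‖ ≤ ‖L‖ * (2 * (ε * r)) := by
    refine (L.le_opNorm _).trans ?_
    gcongr
    exact (norm_sub_le _ _).trans (by linarith)
  have hid : (2 * r) • L v = (f y - f z) - (f y - f x - L (y - x)) + (f z - f x - L (z - x))
      - L (a - b) := by
    simp only [a, b, map_sub, map_add, map_smul, map_neg, smul_neg]
    module
  have h2 : 2 * r * ‖L v‖ ≤ ‖f y - f z‖ + ‖f y - f x - L (y - x)‖ + ‖f z - f x - L (z - x)‖
      + ‖L (a - b)‖ := by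
    calc 2 * r * ‖L v‖ = ‖(2 * r) • L v‖ := by
          rw [norm_smul, Real.norm_of_nonneg (by positivity)]
      _ ≤ _ := by
          rw [hid]
          refine (norm_sub_le _ _).trans ?_
          gcongr
          refine (norm_add_le _ _).trans ?_
          gcongr
          exact norm_sub_le _ _
  have h3 := mul_le_mul_of_nonneg_right hε2 hr0.le
  linarith

lemma HasFDerivAt.eventually_diam_image_ball_le_mul (hn : 1 ≤ n) (hf : HasFDerivAt f L x)
    (hL : L ≠ 0) {U : Set (En n)} (hU : FinelyOpen1 U) (hx : x ∈ U) {c : ℝ} (hc : 1 < c) :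
    ∀ᶠ r in 𝓝[>] (0 : ℝ), Metric.ediam (f '' ball x r) ≤
      ENNReal.ofReal c * Metric.ediam (f '' (ball x r ∩ U)) := by
  have hL' : 0 < ‖L‖ := norm_pos_iff.2 hL
  have hm : ‖L‖ * (1 + c) / c < 2 * ‖L‖ := by
    rw [div_lt_iff₀ (by linarith)]
    nlinarith
  filter_upwards [hf.eventually_diam_image_ball_le (by nlinarith : 2 * ‖L‖ < ‖L‖ * (1 + c)),
    hf.eventually_le_diam_image_ball_inter hn hU hx (by positivity) hm] with r h1 h2
  refine h1.trans (le_trans (le_of_eq ?_) (mul_le_mul_right h2 _))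
  rw [← ENNReal.ofReal_mul (by positivity)]
  congr 1
  field_simp

lemma HasFDerivAt.jvol_eq_zero (hn : 1 ≤ n) (hf : HasFDerivAt f (0 : En n →L[ℝ] En n) x) : Jvol f x = 0 := by
  have hle : ∀ η : ℝ, 0 < η → Jvol f x ≤ ENNReal.ofReal (η ^ n) := by
    intro η hη
    refine limsup_le_of_le (by isBoundedDefault) ?_
    filter_upwards [hf.eventually_forall_ball_norm_le hη, self_mem_nhdsWithin] with r hr hr0
    rw [mem_Ioi] at hr0
    refine ENNReal.div_le_of_le_mul ?_
    calc volume (f '' ball x r) ≤ volume (closedBall (f x) (η * r)) := by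
          refine measure_mono ?_
          rintro _ ⟨y, hy, rfl⟩
          simpa [dist_eq_norm] using hr y hy
      _ = ENNReal.ofReal (η ^ n) * volume (ball x r) := by
          rw [Measure.addHaar_closedBall _ _ (by positivity), Measure.addHaar_ball_of_pos _ _ hr0,
            mul_pow, ENNReal.ofReal_mul (by positivity), mul_assoc, finrank_euclideanSpace_fin]
  have hlim : Tendsto (fun η : ℝ => ENNReal.ofReal (η ^ n)) (𝓝[>] 0) (𝓝 0) := by
    have h : Continuous fun η : ℝ => ENNReal.ofReal (η ^ n) :=
      ENNReal.continuous_ofReal.comp (continuous_pow n)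
    have h0 := h.tendsto 0
    rw [zero_pow (by omega), ENNReal.ofReal_zero] at h0
    exact h0.mono_left nhdsWithin_le_nhds
  exact le_antisymm (ge_of_tendsto hlim (eventually_mem_nhdsWithin.mono hle)) zero_le

lemma KfU_univ_le_mul (hn : 1 ≤ n) {U : Set (En n)} {r c : ℝ} (hc : 1 ≤ c)
    (h : Metric.ediam (f '' ball x r) ≤ ENNReal.ofReal c * Metric.ediam (f '' (ball x r ∩ U))) :
    KfU f univ x r ≤ (ENNReal.ofReal c ^ n) ^ (((n : ℝ) - 1)⁻¹) * KfU f U x r := by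
  have hexp : 0 ≤ ((n : ℝ) - 1)⁻¹ := inv_nonneg.2 (sub_nonneg.2 (by exact_mod_cast hn))
  have hc0 : 0 < ENNReal.ofReal c := ENNReal.ofReal_pos.2 (by linarith)
  unfold KfU
  split_ifs with hv
  · rw [ENNReal.mul_top]
    exact (ENNReal.rpow_pos (ENNReal.pow_pos hc0 n)
      (ENNReal.pow_ne_top ofReal_ne_top)).ne'
  · rw [← ENNReal.mul_rpow_of_nonneg _ _ hexp, inter_univ, ← mul_div_assoc, ← mul_pow]
    gcongr
    exact h

lemma HasFDerivAt.Kmetric_le_limsup_KfU (hn : 1 ≤ n) (hf : HasFDerivAt f L x) (hL : L ≠ 0)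
    {U : Set (En n)} (hU : FinelyOpen1 U) (hx : x ∈ U) :
    Kmetric f x ≤ limsup (fun r => KfU f U x r) (𝓝[>] 0) := by
  have hexp : 0 ≤ ((n : ℝ) - 1)⁻¹ := inv_nonneg.2 (sub_nonneg.2 (by exact_mod_cast hn))
  have hle : ∀ c : ℝ, 1 < c → Kmetric f x ≤ (ENNReal.ofReal c ^ n) ^ (((n : ℝ) - 1)⁻¹) *
      limsup (fun r => KfU f U x r) (𝓝[>] 0) := by
    intro c hc
    rw [← ENNReal.limsup_const_mul_of_ne_top
      (ENNReal.rpow_ne_top_of_nonneg hexp (ENNReal.pow_ne_top ofReal_ne_top))]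
    exact limsup_le_limsup ((hf.eventually_diam_image_ball_le_mul hn hL hU hx hc).mono
      fun r => KfU_univ_le_mul hn hc.le)
  have hlim : Tendsto (fun c : ℝ => (ENNReal.ofReal c ^ n) ^ (((n : ℝ) - 1)⁻¹)) (𝓝[>] 1) (𝓝 1) := by
    have h : Continuous fun c : ℝ => (ENNReal.ofReal c ^ n) ^ (((n : ℝ) - 1)⁻¹) :=
      ENNReal.continuous_rpow_const.comp
        ((ENNReal.continuous_pow n).comp ENNReal.continuous_ofReal)
    have h1 := h.tendsto 1
    simp only [ENNReal.ofReal_one, one_pow, ENNReal.one_rpow] at h1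
    exact h1.mono_left nhdsWithin_le_nhds
  have hlim' := ENNReal.Tendsto.mul_const (b := limsup (fun r => KfU f U x r) (𝓝[>] 0)) hlim
    (.inl one_ne_zero)
  rw [one_mul] at hlim'
  exact ge_of_tendsto hlim' (eventually_mem_nhdsWithin.mono hle)

end Differentiable

/-- For a `W^{1,1}_loc` homeomorphism `f : Ω → Ω'`, at a.e. point where `f` is
differentiable and `0 < J_f(x) < ∞`, the metric dilatation and the fine dilatation
coincide: `K_f(x) = K^fine_f(x)`. -/
theorem Kmetric_eq_Kfine (hn : 2 ≤ n) (Ω Ω' : Set (En n)) (hΩ : IsOpen Ω)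
    (hΩ' : IsOpen Ω') (f : En n → En n) (g : En n → (En n →L[ℝ] En n))
    (hcont : ContinuousOn f Ω) (hinj : InjOn f Ω) (himg : f '' Ω = Ω')
    (hopen : ∀ V ⊆ Ω, IsOpen V → IsOpen (f '' V))
    (hfloc : LocallyIntegrableOn f Ω)
    (hgloc : LocallyIntegrableOn (fun x => ‖g x‖) Ω)
    (hweak : HasWeakGradOn f g Ω) :
    ∀ᵐ x ∂(volume.restrict Ω),
      (DifferentiableAt ℝ f x ∧ 0 < Jvol f x ∧ Jvol f x < ∞) →
        Kmetric f x = Kfine f x := by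
  refine .of_forall fun x ⟨hdiff, hpos, _⟩ => ?_
  have hn1 : 1 ≤ n := by omega
  refine le_antisymm (le_iInf₂ fun U hU => le_iInf fun hx => ?_)
    (iInf₂_le_of_le univ finelyOpen1_univ (iInf_le_of_le (mem_univ x) le_rfl))
  refine hdiff.hasFDerivAt.Kmetric_le_limsup_KfU hn1 (fun hL => hpos.ne' ?_) hU hx
  exact (hL ▸ hdiff.hasFDerivAt : HasFDerivAt f (0 : En n →L[ℝ] En n) x).jvol_eq_zero hn1

end
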